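/- Every α¹-derivation of the q-deformed W(2,2) algebra is zero: if D: W_q → W_q is a linear map satisfying D ∘ α = α ∘ D and D([x,y]_q) = [α(x), D(y)]_q − [α(y), D(x)]_q for all x, y ∈ W_q, then D = 0. -/

import Mathlib

noncomputable section

/-- The underlying space of the q-deformed W(2,2) algebra: formal ℂ-linear
combinations of the basis `{L_n, M_n : n ∈ ℤ}`. -/
abbrev Wq : Type := (ℤ →₀ ℂ) × (ℤ →₀ ℂ)

/-- The basis vector `L_n`. -/
def Lb (n : ℤ) : Wq := (Finsupp.single n 1, 0)

/-- The basis vector `M_n`. -/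
def Mb (n : ℤ) : Wq := (0, Finsupp.single n 1)

/-- The q-number `[n]_q = (q^n - q^(-n))/(q - q⁻¹)`. -/
def qnum (q : ℂ) (n : ℤ) : ℂ := (q ^ n - q ^ (-n)) / (q - q⁻¹)

/-- `⟨n⟩_q = q^n + q^(-n)`. -/
def qang (q : ℂ) (n : ℤ) : ℂ := q ^ n + q ^ (-n)

/-!
The algebra is `ℤ`-graded with homogeneous components `ℂ L_n ⊕ ℂ M_n`. Since `q` is not a root of
unity, commuting with `α` confines the image of the degree `m` component to degrees `m` and `-m`,
and the derivation identity for `L_0` and `L_m`, in which `[L_0, ·]` multiplies degree `n` by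
`[n]_q`, determines `D L_m` from `D L_0 = a L_0 + c M_0`:
`(2^k - 1) D L_m = -⟨m⟩_q^k (a L_m + c M_m)` for `m ≠ 0`.
The identity for `L_m` and `L_{-m}` then reads `(2^k - 1 + 2⟨m⟩_q^(2k)) D L_0 = 0`, and some `m`
makes the scalar nonzero because `⟨m⟩_q` takes infinitely many values. Once `D` kills every `L_m`,
the same confinement argument kills everything else.
-/

lemma zpow_injective_of_forall_zpow_ne_one {q : ℂ} (hq0 : q ≠ 0)
    (hq1 : ∀ k : ℤ, 1 ≤ k → q ^ k ≠ 1) : Function.Injective fun n : ℤ => q ^ n := by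
  intro m n hmn
  wlog hlt : m < n generalizing m n
  · rcases (not_lt.mp hlt).eq_or_lt with h | h
    · exact h.symm
    · exact (this hmn.symm h).symm
  · have hone : q ^ (n - m) = 1 := by
      rw [zpow_sub₀ hq0, ← show q ^ m = q ^ n from hmn, div_self (zpow_ne_zero m hq0)]
    exact absurd hone (hq1 (n - m) (by lia))

lemma ne_zero_of_zpow_injective {q : ℂ} (hq : Function.Injective fun n : ℤ => q ^ n) :
    q ≠ 0 := by
  rintro rfl
  exact absurd (@hq 1 2 (by simp)) (by norm_num)

lemma qnum_neg (q : ℂ) (n : ℤ) : qnum q (-n) = -qnum q n := by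
  simp only [qnum, neg_neg]
  ring

lemma qang_neg (q : ℂ) (n : ℤ) : qang q (-n) = qang q n := by
  simp only [qang, neg_neg, add_comm]

lemma qang_zero (q : ℂ) : qang q 0 = 2 := by
  norm_num [qang]

lemma qnum_ne_zero {q : ℂ} (hq : Function.Injective fun n : ℤ => q ^ n) {n : ℤ} (hn : n ≠ 0) :
    qnum q n ≠ 0 := by
  have hsub : ∀ j : ℤ, j ≠ 0 → q ^ j - q ^ (-j) ≠ 0 :=
    fun j hj => sub_ne_zero.mpr (hq.ne (by lia))
  exact div_ne_zero (hsub n hn) (by simpa using hsub 1 one_ne_zero)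

lemma qang_eq_qang_iff {q : ℂ} (hq : Function.Injective fun n : ℤ => q ^ n) {m n : ℤ} :
    qang q m = qang q n ↔ m = n ∨ m = -n := by
  refine ⟨fun h => ?_, by rintro (rfl | rfl) <;> simp [qang_neg]⟩
  have hq0 := ne_zero_of_zpow_injective hq
  have hfactor : (q ^ m - q ^ n) * (q ^ m - q ^ (-n)) = 0 := by
    have hm := zpow_ne_zero m hq0
    have hn := zpow_ne_zero n hq0
    simp only [qang, zpow_neg] at h ⊢
    field_simp at h ⊢
    linear_combination h
  rcases mul_eq_zero.mp hfactor with h | h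
  · exact .inl (hq (sub_eq_zero.mp h))
  · exact .inr (hq (sub_eq_zero.mp h))

lemma exists_qang_pow_ne {q : ℂ} (hq : Function.Injective fun n : ℤ => q ^ n) {k : ℕ}
    (hk : k ≠ 0) (c : ℂ) : ∃ m ≠ 0, qang q m ^ k ≠ c := by
  by_contra! h
  have hinj : Function.Injective fun n : ℕ => qang q (n + 1) := by
    intro i j hij
    rcases (qang_eq_qang_iff hq).mp hij with h | h <;> lia
  refine Set.infinite_of_injective_forall_mem hinj (fun n => ?_)
    (Polynomial.nthRootsFinset k c).finite_toSet
  exact (Polynomial.mem_nthRootsFinset (Nat.pos_of_ne_zero hk) c).mpr (h (n + 1) (by lia))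

namespace Wq

/-- The parametrization `(a, c) ↦ a L_n + c M_n` of the homogeneous component of degree `n`. -/
def homog (n : ℤ) : ℂ × ℂ →ₗ[ℂ] Wq :=
  (Finsupp.lsingle n).prodMap (Finsupp.lsingle n)

/-- The pair of coefficients of `L_n` and `M_n`, that is, the projection onto the homogeneous
component of degree `n` in the coordinates of `homog`. -/
def coeff (n : ℤ) : Wq →ₗ[ℂ] ℂ × ℂ :=
  (Finsupp.lapply n).prodMap (Finsupp.lapply n)

lemma homog_eq_smul_add_smul (n : ℤ) (v : ℂ × ℂ) : homog n v = v.1 • Lb n + v.2 • Mb n := by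
  simp [homog, Lb, Mb]

lemma homog_one_zero (n : ℤ) : homog n (1, 0) = Lb n := by
  simp [homog_eq_smul_add_smul]

lemma coeff_homog (k n : ℤ) (v : ℂ × ℂ) : coeff k (homog n v) = if n = k then v else 0 := by
  split_ifs with h <;> simp [coeff, homog, h]

lemma ext_coeff {x y : Wq} (h : ∀ n, coeff n x = coeff n y) : x = y :=
  Prod.ext (Finsupp.ext fun n => congrArg Prod.fst (h n))
    (Finsupp.ext fun n => congrArg Prod.snd (h n))

lemma hom_ext_homog {N : Type*} [AddCommMonoid N] [Module ℂ N] {S T : Wq →ₗ[ℂ] N}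
    (h : ∀ n v, S (homog n v) = T (homog n v)) : S = T := by
  ext n
  · simpa [homog] using h n (1, 0)
  · simpa [homog] using h n (0, 1)

end Wq

open Wq

/-- A linear map that multiplies the homogeneous component of each degree `n` by the scalar `f n`,
as `α` does for `f = ⟨·⟩_q` and `[L_0, ·]` does for `f = [·]_q`. -/
def ActsByDegree (T : Wq →ₗ[ℂ] Wq) (f : ℤ → ℂ) : Prop :=
  ∀ n v, T (homog n v) = f n • homog n v

/-- The elements `L_n` act from the left as they do in the q-deformed W(2,2) algebra; nothing is
prescribed for the products `[M_n, ·]`. -/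
def IsWittAction (q : ℂ) (br : Wq →ₗ[ℂ] Wq →ₗ[ℂ] Wq) : Prop :=
  ∀ n m v, br (Lb n) (homog m v) = qnum q (m - n) • homog (m + n) v

/-- The `αᵏ`-derivations of the product `br`. -/
structure IsAlphaPowDerivation (br : Wq →ₗ[ℂ] Wq →ₗ[ℂ] Wq) (α : Wq →ₗ[ℂ] Wq) (k : ℕ)
    (D : Wq →ₗ[ℂ] Wq) : Prop where
  map_alpha : ∀ x, D (α x) = α (D x)
  leibniz : ∀ x y, D (br x y) = br ((α ^ k) x) (D y) - br ((α ^ k) y) (D x)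

namespace ActsByDegree

variable {T : Wq →ₗ[ℂ] Wq} {f : ℤ → ℂ}

lemma of_basis (hL : ∀ n, T (Lb n) = f n • Lb n) (hM : ∀ n, T (Mb n) = f n • Mb n) :
    ActsByDegree T f := by
  intro n v
  simp only [homog_eq_smul_add_smul, map_add, map_smul, hL, hM]
  module

lemma map_Lb (hT : ActsByDegree T f) (n : ℤ) : T (Lb n) = f n • Lb n := by
  simpa only [homog_one_zero] using hT n (1, 0)

lemma pow (hT : ActsByDegree T f) (k : ℕ) : ActsByDegree (T ^ k) (fun n => f n ^ k) := by
  intro n v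
  induction k with
  | zero => simp
  | succ k ih => rw [pow_succ, Module.End.mul_apply, hT, map_smul, ih, smul_smul, ← pow_succ']

lemma coeff_apply (hT : ActsByDegree T f) (n : ℤ) (w : Wq) : coeff n (T w) = f n • coeff n w := by
  suffices h : coeff n ∘ₗ T = f n • coeff n from LinearMap.congr_fun h w
  refine hom_ext_homog fun m v => ?_
  rw [LinearMap.comp_apply, hT, map_smul, LinearMap.smul_apply, coeff_homog]
  split_ifs with hmn
  · rw [hmn]
  · simp only [smul_zero]

lemma coeff_eq_zero (hT : ActsByDegree T f) {c : ℂ} {w : Wq} (hw : T w = c • w) {n : ℤ}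
    (hn : f n ≠ c) : coeff n w = 0 := by
  have h : f n • coeff n w = c • coeff n w := by rw [← hT.coeff_apply, hw, map_smul]
  rw [← sub_eq_zero, ← sub_smul] at h
  exact (smul_eq_zero.mp h).resolve_left (sub_ne_zero.mpr hn)

end ActsByDegree

lemma IsWittAction.of_basis {q : ℂ} {br : Wq →ₗ[ℂ] Wq →ₗ[ℂ] Wq}
    (hLL : ∀ n m : ℤ, br (Lb n) (Lb m) = qnum q (m - n) • Lb (m + n))
    (hLM : ∀ n m : ℤ, br (Lb n) (Mb m) = qnum q (m - n) • Mb (m + n)) : IsWittAction q br := by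
  intro n m v
  simp only [homog_eq_smul_add_smul, map_add, map_smul, hLL, hLM]
  module

lemma IsWittAction.actsByDegree_Lb_zero {q : ℂ} {br : Wq →ₗ[ℂ] Wq →ₗ[ℂ] Wq}
    (hbr : IsWittAction q br) : ActsByDegree (br (Lb 0)) (qnum q) := by
  intro n v
  simpa using hbr 0 n v

section Eigenvectors

variable {q : ℂ} {α : Wq →ₗ[ℂ] Wq} (hq : Function.Injective fun n : ℤ => q ^ n)
  (hα : ActsByDegree α (qang q))

include hq hα

lemma eq_homog_zero_of_alpha_eq {w : Wq} (hw : α w = qang q 0 • w) : w = homog 0 (coeff 0 w) := by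
  refine ext_coeff fun n => ?_
  rw [coeff_homog]
  split_ifs with hn
  · rw [hn]
  · refine hα.coeff_eq_zero hw fun h => ?_
    rcases (qang_eq_qang_iff hq).mp h with h | h <;> lia

lemma eq_zero_of_alpha_eq_of_qnum_smul_eq {T : Wq →ₗ[ℂ] Wq} (hT : ActsByDegree T (qnum q))
    {m : ℤ} (hm : m ≠ 0) {c : ℂ} (hc : c ^ 2 ≠ 1) {w : Wq} (hw : α w = qang q m • w)
    (hTw : qnum q m • w = c • T w) : w = 0 := by
  refine ext_coeff fun n => ?_
  rw [map_zero]
  by_cases hn : qang q n = qang q m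
  · have hcoeff : (qnum q m - c * qnum q n) • coeff n w = 0 := by
      rw [sub_smul, mul_smul, ← hT.coeff_apply, ← map_smul, ← map_smul, hTw, sub_self]
    refine (smul_eq_zero.mp hcoeff).resolve_left fun h => ?_
    have hsq : qnum q n ^ 2 = qnum q m ^ 2 := by
      rcases (qang_eq_qang_iff hq).mp hn with rfl | rfl <;> simp [qnum_neg]
    refine hc (mul_right_cancel₀ (pow_ne_zero 2 (qnum_ne_zero hq hm)) ?_)
    calc c ^ 2 * qnum q m ^ 2 = (c * qnum q n) ^ 2 := by rw [mul_pow, hsq]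
      _ = 1 * qnum q m ^ 2 := by rw [← sub_eq_zero.mp h, one_mul]
  · exact hα.coeff_eq_zero hw hn

end Eigenvectors

lemma two_pow_sq_ne_one {R : Type*} [Semiring R] [CharZero R] {k : ℕ} (hk : k ≠ 0) :
    ((2 : R) ^ k) ^ 2 ≠ 1 := by
  rw [← pow_mul]
  exact_mod_cast (Nat.one_lt_two_pow (mul_ne_zero hk two_ne_zero)).ne'

namespace IsAlphaPowDerivation

variable {q : ℂ} {br : Wq →ₗ[ℂ] Wq →ₗ[ℂ] Wq} {α D : Wq →ₗ[ℂ] Wq} {k : ℕ}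

lemma alpha_apply_eq_smul (hD : IsAlphaPowDerivation br α k D) {c : ℂ} {x : Wq}
    (hx : α x = c • x) : α (D x) = c • D x := by
  rw [← hD.map_alpha, hx, map_smul]

lemma leibniz_Lb_homog (hD : IsAlphaPowDerivation br α k D) (hbr : IsWittAction q br)
    (hα : ActsByDegree α (qang q)) (n m : ℤ) (v : ℂ × ℂ) :
    qnum q (m - n) • D (homog (m + n) v) =
      qang q n ^ k • br (Lb n) (D (homog m v)) - qang q m ^ k • br (homog m v) (D (Lb n)) := by
  have h := hD.leibniz (Lb n) (homog m v)
  rwa [hbr, map_smul, (hα.pow k).map_Lb, hα.pow k, map_smul, map_smul, LinearMap.smul_apply,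
    LinearMap.smul_apply] at h

lemma leibniz_Lb (hD : IsAlphaPowDerivation br α k D) (hbr : IsWittAction q br)
    (hα : ActsByDegree α (qang q)) (n m : ℤ) :
    qnum q (m - n) • D (Lb (m + n)) =
      qang q n ^ k • br (Lb n) (D (Lb m)) - qang q m ^ k • br (Lb m) (D (Lb n)) := by
  simpa only [homog_one_zero] using hD.leibniz_Lb_homog hbr hα n m (1, 0)

variable (hq : Function.Injective fun n : ℤ => q ^ n) (hbr : IsWittAction q br)
  (hα : ActsByDegree α (qang q)) (hk : k ≠ 0) (hD : IsAlphaPowDerivation br α k D)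

include hq hbr hα hk hD

lemma smul_map_Lb {v : ℂ × ℂ} (hv : D (Lb 0) = homog 0 v) {m : ℤ} (hm : m ≠ 0) :
    ((2 : ℂ) ^ k - 1) • D (Lb m) = -(qang q m ^ k • homog m v) := by
  rw [← add_eq_zero_iff_eq_neg]
  refine eq_zero_of_alpha_eq_of_qnum_smul_eq hq hα hbr.actsByDegree_Lb_zero hm
    (two_pow_sq_ne_one hk) ?_ ?_
  · rw [map_add, map_smul, map_smul, hD.alpha_apply_eq_smul (hα.map_Lb m), hα]
    module
  · have h : qnum q m • D (Lb m) =
        (2 : ℂ) ^ k • br (Lb 0) (D (Lb m)) + (qang q m ^ k * qnum q m) • homog m v := by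
      have h0 := hD.leibniz_Lb hbr hα 0 m
      rw [sub_zero, add_zero, qang_zero, hv, hbr, zero_sub, zero_add, qnum_neg] at h0
      rw [h0]
      module
    rw [map_add, map_smul, map_smul, hbr.actsByDegree_Lb_zero, smul_add, smul_comm, h]
    module

lemma map_Lb_zero : D (Lb 0) = 0 := by
  obtain ⟨v, hv⟩ : ∃ v, D (Lb 0) = homog 0 v :=
    ⟨_, eq_homog_zero_of_alpha_eq hq hα (hD.alpha_apply_eq_smul (hα.map_Lb 0))⟩
  obtain ⟨m, hm, hmk⟩ := exists_qang_pow_ne hq (mul_ne_zero hk two_ne_zero) ((1 - (2 : ℂ) ^ k) / 2)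
  have hbracket : ∀ n ≠ 0, ((2 : ℂ) ^ k - 1) • br (Lb (-n)) (D (Lb n)) =
      -((qang q n ^ k * qnum q (n + n)) • homog 0 v) := by
    intro n hn
    rw [← map_smul, hD.smul_map_Lb hq hbr hα hk hv hn, map_neg, map_smul, hbr, sub_neg_eq_add,
      add_neg_cancel, smul_smul]
  have hcoef : (qnum q (m + m) * (2 ^ k - 1 + 2 * qang q m ^ (k * 2))) • homog 0 v = 0 := by
    have hneg := hbracket (-m) (neg_ne_zero.mpr hm)
    rw [neg_neg, qang_neg, ← neg_add, qnum_neg] at hneg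
    have h := congrArg (((2 : ℂ) ^ k - 1) • ·) (hD.leibniz_Lb hbr hα (-m) m)
    simp only [sub_neg_eq_add, add_neg_cancel, qang_neg, hv] at h
    rw [smul_sub, smul_comm _ (qang q m ^ k), smul_comm _ (qang q m ^ k), hbracket m hm, hneg,
      ← sub_eq_zero] at h
    rw [← h, pow_mul]
    module
  rw [hv]
  refine (smul_eq_zero.mp hcoef).resolve_left (mul_ne_zero (qnum_ne_zero hq (by lia)) fun h => ?_)
  exact hmk (by linear_combination h / 2)

lemma map_homog_of_ne_zero {m : ℤ} (hm : m ≠ 0) (v : ℂ × ℂ) : D (homog m v) = 0 := by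
  refine eq_zero_of_alpha_eq_of_qnum_smul_eq hq hα hbr.actsByDegree_Lb_zero hm
    (two_pow_sq_ne_one hk) (hD.alpha_apply_eq_smul (hα m v)) ?_
  simpa [hD.map_Lb_zero hq hbr hα hk, qang_zero] using hD.leibniz_Lb_homog hbr hα 0 m v

lemma map_homog_zero (v : ℂ × ℂ) : D (homog 0 v) = 0 := by
  have hL1 : D (Lb 1) = 0 := by
    simpa only [homog_one_zero] using hD.map_homog_of_ne_zero hq hbr hα hk one_ne_zero (1, 0)
  have h := hD.leibniz_Lb_homog hbr hα 1 (-1) v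
  rw [hL1, neg_add_cancel, hD.map_homog_of_ne_zero hq hbr hα hk (neg_ne_zero.mpr one_ne_zero),
    map_zero, map_zero, smul_zero, smul_zero, sub_zero] at h
  exact (smul_eq_zero.mp h).resolve_left (qnum_ne_zero hq (by norm_num))

end IsAlphaPowDerivation

theorem alpha_one_derivation_eq_zero_general {q : ℂ}
    (hq : Function.Injective fun n : ℤ => q ^ n) {br : Wq →ₗ[ℂ] Wq →ₗ[ℂ] Wq}
    (hbr : IsWittAction q br) {α : Wq →ₗ[ℂ] Wq} (hα : ActsByDegree α (qang q)) {k : ℕ}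
    (hk : k ≠ 0) {D : Wq →ₗ[ℂ] Wq} (hD : IsAlphaPowDerivation br α k D) : D = 0 := by
  refine hom_ext_homog fun m v => ?_
  rcases eq_or_ne m 0 with rfl | hm
  · exact hD.map_homog_zero hq hbr hα hk v
  · exact hD.map_homog_of_ne_zero hq hbr hα hk hm v

/-- Every `α¹`-derivation of the q-deformed W(2,2) algebra is zero. -/
theorem alpha_one_derivation_eq_zero (q : ℂ) (hq0 : q ≠ 0)
    (hq1 : ∀ k : ℤ, 1 ≤ k → q ^ k ≠ 1)
    (br : Wq →ₗ[ℂ] Wq →ₗ[ℂ] Wq) (α : Wq →ₗ[ℂ] Wq)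
    (hLL : ∀ n m : ℤ, br (Lb n) (Lb m) = qnum q (m - n) • Lb (m + n))
    (hLM : ∀ n m : ℤ, br (Lb n) (Mb m) = qnum q (m - n) • Mb (m + n))
    (hML : ∀ m n : ℤ, br (Mb m) (Lb n) = qnum q (n - m) • Mb (m + n))
    (hMM : ∀ n m : ℤ, br (Mb n) (Mb m) = 0)
    (hαL : ∀ n : ℤ, α (Lb n) = qang q n • Lb n)
    (hαM : ∀ n : ℤ, α (Mb n) = qang q n • Mb n)
    (D : Wq →ₗ[ℂ] Wq)
    (hDα : ∀ x : Wq, D (α x) = α (D x))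
    (hDder : ∀ x y : Wq, D (br x y) = br (α x) (D y) - br (α y) (D x)) :
    D = 0 := by
  exact alpha_one_derivation_eq_zero_general (zpow_injective_of_forall_zpow_ne_one hq0 hq1)
    (.of_basis hLL hLM) (.of_basis hαL hαM) one_ne_zero ⟨hDα, by simpa only [pow_one] using hDder⟩
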